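/- arXiv:1610.03613 — 7 statements merged into one kernel-verified Lean document; each statement's English description precedes it below -/
import Mathlib

section
/- Let g > 0 and define ψ(x) = (1 + g x²) exp(−x²/2) for x ∈ ℝ. Then ψ is twice differentiable, ψ(x) → 0 as |x| → ∞, and for all x ∈ ℝ, −ψ''(x) + (x² + λ₁ x²/(1 + g x²)) ψ(x) = E₀ ψ(x), where λ₁ = −2g(2 + g) and E₀ = 5 + λ₁/g = 1 − 2g. -/
/-!
Differentiating twice gives
`ψ'' x = (2g - 1 + (1 - 5g) x² + g x⁴) exp (-x² / 2)`. Since `1 + g x²` is a factor of `ψ`, the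
denominator of the potential cancels and the equation becomes the polynomial identity
`1 - 2g + 5g x² + λ₁ x² = (1 - 2g)(1 + g x²)`, which holds for `λ₁ = -2g(2 + g)`. The decay at
infinity is that of `t exp (-t)` with `t = x² / 2`.
-/

open Real Filter

/-- Exact ground-state solution of the Schrödinger equation with rational potential
`V(x) = x² + λ₁ x²/(1 + g x²)`, `λ₁ = −2g(2+g)`, giving `E₀ = 5 + λ₁/g = 1 − 2g`. -/
theorem stmt_0 (g : ℝ) (hg : 0 < g)
    (ψ : ℝ → ℝ) (hψ : ψ = fun x : ℝ => (1 + g * x ^ 2) * Real.exp (-x ^ 2 / 2))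
    (lam₁ E₀ : ℝ) (hlam : lam₁ = -2 * g * (2 + g)) (hE : E₀ = 5 + lam₁ / g) :
    (Differentiable ℝ ψ ∧ Differentiable ℝ (deriv ψ)) ∧
    Tendsto ψ (cocompact ℝ) (nhds 0) ∧
    (∀ x : ℝ, -(deriv (deriv ψ) x) + (x ^ 2 + lam₁ * x ^ 2 / (1 + g * x ^ 2)) * ψ x
      = E₀ * ψ x) ∧
    E₀ = 1 - 2 * g := by
  have hEval : E₀ = 1 - 2 * g := by
    rw [hE, hlam]; field_simp; ring
  have hexp : ∀ x : ℝ, HasDerivAt (fun x : ℝ => Real.exp (-x ^ 2 / 2))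
      (Real.exp (-x ^ 2 / 2) * (-x)) x := by
    intro x
    have h : HasDerivAt (fun x : ℝ => -x ^ 2 / 2) (-x) x := by
      refine ((hasDerivAt_pow 2 x).fun_neg.div_const 2).congr_deriv ?_
      push_cast
      ring
    exact h.exp
  have h1 : ∀ x : ℝ, HasDerivAt ψ
      ((2 * g * x - x - g * x ^ 3) * Real.exp (-x ^ 2 / 2)) x := by
    intro x
    rw [hψ]
    refine ((((hasDerivAt_pow 2 x).const_mul g).const_add 1).fun_mul (hexp x)).congr_deriv ?_
    push_cast
    ring
  have hd : deriv ψ = fun x : ℝ => (2 * g * x - x - g * x ^ 3) * Real.exp (-x ^ 2 / 2) :=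
    funext fun x => (h1 x).deriv
  have h2 : ∀ x : ℝ, HasDerivAt (deriv ψ)
      ((2 * g - 1 + (1 - 5 * g) * x ^ 2 + g * x ^ 4) * Real.exp (-x ^ 2 / 2)) x := by
    intro x
    rw [hd]
    refine (((((hasDerivAt_id' x).const_mul (2 * g)).fun_sub (hasDerivAt_id' x)).fun_sub
      ((hasDerivAt_pow 3 x).const_mul g)).fun_mul (hexp x)).congr_deriv ?_
    push_cast
    ring
  refine ⟨⟨fun x => (h1 x).differentiableAt, fun x => (h2 x).differentiableAt⟩, ?_, ?_, hEval⟩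
  · -- With `t = x² / 2 → ∞`, `ψ x = e⁻ᵗ + 2 g t e⁻ᵗ`.
    have ht : Tendsto (fun x : ℝ => x ^ 2 / 2) (cocompact ℝ) atTop := by
      have h := (tendsto_pow_atTop (two_ne_zero)).comp (tendsto_norm_cocompact_atTop (E := ℝ))
      refine (h.atTop_div_const (two_pos : (0 : ℝ) < 2)).congr fun x => ?_
      simp
    have h0 : Tendsto (fun t : ℝ => Real.exp (-t) + 2 * g * (t ^ 1 * Real.exp (-t)))
        atTop (nhds 0) := by
      simpa using Real.tendsto_exp_neg_atTop_nhds_zero.add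
        ((Real.tendsto_pow_mul_exp_neg_atTop_nhds_zero 1).const_mul (2 * g))
    refine (h0.comp ht).congr fun x => ?_
    simp only [hψ, Function.comp, neg_div]
    ring
  · intro x
    have hx : 1 + g * x ^ 2 ≠ 0 := by positivity
    rw [(h2 x).deriv, hEval, hψ, hlam]
    field_simp
    ring
end

section
/- Let g > 0 and define ψ(x) = x (1 + g x²) exp(−x²/2) for x ∈ ℝ. Then ψ is twice differentiable, ψ(x) → 0 as |x| → ∞, and for all x ∈ ℝ, −ψ''(x) + (x² + λ₂ x²/(1 + g x²)) ψ(x) = E₁ ψ(x), where λ₂ = −2g(2 + 3g) and E₁ = 7 + λ₂/g = 3 − 6g. -/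
/-!
Writing `ψ = p e^{-x²/2}` with `p = x + g x³`, two applications of
`(p e^{-x²/2})' = (p' - x p) e^{-x²/2}` give
`ψ'' = ((6g - 3) x + (1 - 7g) x³ + g x⁵) e^{-x²/2}`. Since the denominator `1 + g x²` of the
potential divides `p`, the eigenvalue equation reduces to the polynomial identity
`(3 - 6g) x + 7g x³ + λ₂ x³ = (3 - 6g)(x + g x³)`. Decay at infinity holds because a Gaussian
dominates every power of `|x|`.
-/

open Real Filter

lemma hasDerivAt_mul_gaussian {p : ℝ → ℝ} {p' x : ℝ} (hp : HasDerivAt p p' x) :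
    HasDerivAt (fun y : ℝ => p y * Real.exp (-y ^ 2 / 2))
      ((p' - x * p x) * Real.exp (-x ^ 2 / 2)) x := by
  have hq : HasDerivAt (fun y : ℝ => -y ^ 2 / 2) (-x) x := by
    refine (((hasDerivAt_id' x).fun_pow 2).fun_neg.div_const 2).congr_deriv ?_
    norm_num
    ring
  refine (hp.fun_mul hq.exp).congr_deriv ?_
  ring

lemma tendsto_abs_pow_mul_gaussian (n : ℕ) :
    Tendsto (fun x : ℝ => |x| ^ n * Real.exp (-x ^ 2 / 2)) (cocompact ℝ) (nhds 0) := by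
  refine (tendsto_rpow_abs_mul_exp_neg_mul_sq_cocompact
    (a := 1 / 2) (by norm_num) (n : ℝ)).congr fun x => ?_
  rw [Real.rpow_natCast]
  congr 2
  ring


/-- Exact first excited state of the Schrödinger equation with rational potential
`V(x) = x² + λ₂ x²/(1 + g x²)`, `λ₂ = −2g(2+3g)`, giving `E₁ = 7 + λ₂/g = 3 − 6g`. -/
theorem stmt_1 (g : ℝ) (hg : 0 < g)
    (ψ : ℝ → ℝ) (hψ : ψ = fun x : ℝ => x * (1 + g * x ^ 2) * Real.exp (-x ^ 2 / 2))
    (lam₂ E₁ : ℝ) (hlam : lam₂ = -2 * g * (2 + 3 * g)) (hE : E₁ = 7 + lam₂ / g) :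
    (Differentiable ℝ ψ ∧ Differentiable ℝ (deriv ψ)) ∧
    Tendsto ψ (cocompact ℝ) (nhds 0) ∧
    (∀ x : ℝ, -(deriv (deriv ψ) x) + (x ^ 2 + lam₂ * x ^ 2 / (1 + g * x ^ 2)) * ψ x
      = E₁ * ψ x) ∧
    E₁ = 3 - 6 * g := by
  have hd : ∀ x, HasDerivAt ψ
      ((1 + (3 * g - 1) * x ^ 2 - g * x ^ 4) * Real.exp (-x ^ 2 / 2)) x := by
    intro x
    have hp : HasDerivAt (fun y : ℝ => y * (1 + g * y ^ 2)) (1 + 3 * g * x ^ 2) x := by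
      refine ((hasDerivAt_id' x).fun_mul
        ((((hasDerivAt_id' x).fun_pow 2).const_mul g).const_add 1)).congr_deriv ?_
      norm_num
      ring
    rw [hψ]
    refine (hasDerivAt_mul_gaussian hp).congr_deriv ?_
    ring
  have hd1 : deriv ψ = fun x => (1 + (3 * g - 1) * x ^ 2 - g * x ^ 4) * Real.exp (-x ^ 2 / 2) :=
    funext fun x => (hd x).deriv
  have hdd : ∀ x, HasDerivAt (deriv ψ)
      (((6 * g - 3) * x + (1 - 7 * g) * x ^ 3 + g * x ^ 5) * Real.exp (-x ^ 2 / 2)) x := by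
    intro x
    have hp : HasDerivAt (fun y : ℝ => 1 + (3 * g - 1) * y ^ 2 - g * y ^ 4)
        (2 * (3 * g - 1) * x - 4 * g * x ^ 3) x := by
      refine (((((hasDerivAt_id' x).fun_pow 2).const_mul (3 * g - 1)).const_add 1).fun_sub
        (((hasDerivAt_id' x).fun_pow 4).const_mul g)).congr_deriv ?_
      norm_num
      ring
    rw [hd1]
    refine (hasDerivAt_mul_gaussian hp).congr_deriv ?_
    ring
  have hE' : E₁ = 3 - 6 * g := by
    rw [hE, hlam]
    field_simp
    ring
  refine ⟨⟨fun x => (hd x).differentiableAt, fun x => (hdd x).differentiableAt⟩, ?_, ?_, hE'⟩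
  · rw [tendsto_zero_iff_abs_tendsto_zero]
    have h := (tendsto_abs_pow_mul_gaussian 1).add ((tendsto_abs_pow_mul_gaussian 3).const_mul g)
    rw [mul_zero, add_zero] at h
    refine h.congr fun x => ?_
    have hpos : 0 < 1 + g * x ^ 2 := by positivity
    simp only [hψ, Function.comp_apply, abs_mul, Real.abs_exp, abs_of_pos hpos]
    rw [← sq_abs x]
    ring
  · intro x
    have hne : 1 + g * x ^ 2 ≠ 0 := by positivity
    rw [(hdd x).deriv, hE', hlam, hψ]
    field_simp
    ring
end

section
/- Let g > 0, set s = √(25g² − 12g + 4) (which is well defined since 25g² − 12g + 4 > 0 for all real g), c = (5g − 2 − s)/2, and define ψ(x) = (1 + c x²)(1 + g x²) exp(−x²/2) for x ∈ ℝ. Then ψ is twice differentiable, ψ(x) → 0 as |x| → ∞, and for all x ∈ ℝ, −ψ''(x) + (x² + λ₃ x²/(1 + g x²)) ψ(x) = E₂ ψ(x), where λ₃ = −g(7g + 6 − s) and E₂ = 9 + λ₃/g = 3 − 7g + s. -/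
open Real Filter

/-!
Write `ψ = p · exp(-x²/2)` with `p = 1 + a x² + b x⁴`, `a = c + g`, `b = c g`. Then
`ψ'' = (p'' - 2 x p' + (x² - 1) p) · exp(-x²/2)`, and the factor `1 + g x²` of `p` cancels the
denominator of the potential. The Schrödinger equation thus becomes a polynomial identity in `x²`
whose coefficients vanish because `E₂ = 1 - 2 a = 9 + lam₃ / g` and `c` is a root of
`c² + (2 - 5 g) c - 2 g = 0`, whose discriminant is `25 g² - 12 g + 4 = s²`.
Decay at infinity follows from `uⁿ exp(-u) → 0` with `u = x²/2`.
-/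

lemma hasDerivAt_gauss (x : ℝ) :
    HasDerivAt (fun x : ℝ => Real.exp (-x ^ 2 / 2)) (-x * Real.exp (-x ^ 2 / 2)) x := by
  have h : HasDerivAt (fun x : ℝ => -x ^ 2 / 2) (-x) x := by
    have h2 := ((hasDerivAt_pow 2 x).neg).div_const 2
    refine h2.congr_deriv ?_
    norm_num
    ring
  refine h.exp.congr_deriv ?_
  ring

lemma hasDerivAt_psi (c g x : ℝ) :
    HasDerivAt (fun x : ℝ => (1 + c * x ^ 2) * (1 + g * x ^ 2) * Real.exp (-x ^ 2 / 2))
      ((2 * (c + g) * x + 4 * (c * g) * x ^ 3 - x * ((1 + c * x ^ 2) * (1 + g * x ^ 2)))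
        * Real.exp (-x ^ 2 / 2)) x := by
  have h (k : ℝ) := ((hasDerivAt_pow 2 x).const_mul k).const_add 1
  refine (((h c).mul (h g)).mul (hasDerivAt_gauss x)).congr_deriv ?_
  norm_num
  ring

lemma hasDerivAt_deriv_psi (c g x : ℝ) :
    HasDerivAt (fun x : ℝ =>
      (2 * (c + g) * x + 4 * (c * g) * x ^ 3 - x * ((1 + c * x ^ 2) * (1 + g * x ^ 2)))
        * Real.exp (-x ^ 2 / 2))
      ((2 * (c + g) + 12 * (c * g) * x ^ 2 - 2 * x * (2 * (c + g) * x + 4 * (c * g) * x ^ 3)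
        + (x ^ 2 - 1) * ((1 + c * x ^ 2) * (1 + g * x ^ 2))) * Real.exp (-x ^ 2 / 2)) x := by
  have h (k : ℝ) := ((hasDerivAt_pow 2 x).const_mul k).const_add 1
  have h1 := (hasDerivAt_id' x).const_mul (2 * (c + g))
  have h3 := (hasDerivAt_pow 3 x).const_mul (4 * (c * g))
  refine (((h1.add h3).sub ((hasDerivAt_id' x).mul ((h c).mul (h g)))).mul
    (hasDerivAt_gauss x)).congr_deriv ?_
  norm_num
  ring

lemma tendsto_psi (c g : ℝ) :
    Tendsto (fun x : ℝ => (1 + c * x ^ 2) * (1 + g * x ^ 2) * Real.exp (-x ^ 2 / 2))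
      (cocompact ℝ) (nhds 0) := by
  have hu : Tendsto (fun x : ℝ => x ^ 2 / 2) (cocompact ℝ) atTop := by
    have h := (tendsto_pow_atTop (α := ℝ) two_ne_zero).comp (tendsto_norm_cocompact_atTop (E := ℝ))
    refine (h.atTop_div_const two_pos).congr fun x => ?_
    simp
  have hp (n : ℕ) := Real.tendsto_pow_mul_exp_neg_atTop_nhds_zero n
  have h := ((hp 0).add ((hp 1).const_mul (2 * (c + g)))).add ((hp 2).const_mul (4 * (c * g)))
  simp only [mul_zero, add_zero] at h
  refine (h.comp hu).congr fun x => ?_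
  simp only [Function.comp, neg_div]
  ring

/-- Exact second (even) eigenstate of the Schrödinger equation with rational potential
`V(x) = x² + λ₃ x²/(1 + g x²)`, `λ₃ = −g(7g + 6 − √(25g² − 12g + 4))`,
giving `E₂ = 9 + λ₃/g = 3 − 7g + √(25g² − 12g + 4)`. -/
theorem stmt_2 (g : ℝ) (hg : 0 < g)
    (s : ℝ) (hs : s = Real.sqrt (25 * g ^ 2 - 12 * g + 4))
    (c : ℝ) (hc : c = (5 * g - 2 - s) / 2)
    (ψ : ℝ → ℝ)
    (hψ : ψ = fun x : ℝ => (1 + c * x ^ 2) * (1 + g * x ^ 2) * Real.exp (-x ^ 2 / 2))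
    (lam₃ E₂ : ℝ) (hlam : lam₃ = -g * (7 * g + 6 - s)) (hE : E₂ = 9 + lam₃ / g) :
    (∀ t : ℝ, 0 < 25 * t ^ 2 - 12 * t + 4) ∧
    (Differentiable ℝ ψ ∧ Differentiable ℝ (deriv ψ)) ∧
    Tendsto ψ (cocompact ℝ) (nhds 0) ∧
    (∀ x : ℝ, -(deriv (deriv ψ) x) + (x ^ 2 + lam₃ * x ^ 2 / (1 + g * x ^ 2)) * ψ x
      = E₂ * ψ x) ∧
    E₂ = 3 - 7 * g + s := by
  have hpos (t : ℝ) : 0 < 25 * t ^ 2 - 12 * t + 4 := by nlinarith [sq_nonneg (25 * t - 6)]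
  have hs2 : s ^ 2 = 25 * g ^ 2 - 12 * g + 4 := by rw [hs, Real.sq_sqrt (hpos g).le]
  have hE' : E₂ = 3 - 7 * g + s := by
    rw [hE, hlam]
    field_simp
    ring
  have hd := funext fun x => (hasDerivAt_psi c g x).deriv
  subst hψ
  refine ⟨hpos, ⟨fun x => (hasDerivAt_psi c g x).differentiableAt, ?_⟩, tendsto_psi c g, ?_, hE'⟩
  · rw [hd]
    exact fun x => (hasDerivAt_deriv_psi c g x).differentiableAt
  · intro x
    have hx : 1 + g * x ^ 2 ≠ 0 := by positivity
    have hcancel : (x ^ 2 + lam₃ * x ^ 2 / (1 + g * x ^ 2)) *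
        ((1 + c * x ^ 2) * (1 + g * x ^ 2) * Real.exp (-x ^ 2 / 2)) =
        (x ^ 2 * (1 + g * x ^ 2) + lam₃ * x ^ 2) * (1 + c * x ^ 2) * Real.exp (-x ^ 2 / 2) := by
      field_simp
    have hroot : c ^ 2 + (2 - 5 * g) * c - 2 * g = 0 := by
      rw [hc]
      linear_combination hs2 / 4
    have hsc : s = 5 * g - 2 - 2 * c := by linarith
    rw [hd, (hasDerivAt_deriv_psi c g x).deriv]
    dsimp only
    rw [hcancel, hE', hlam, hsc]
    -- Only the `x²` coefficient survives; it is twice the quadratic satisfied by `c`.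
    linear_combination (2 * x ^ 2 * Real.exp (-x ^ 2 / 2)) * hroot
end

section
/- Let N ∈ ℕ and let A be the real symmetric (2N+1)×(2N+1) matrix indexed by j, k ∈ {−N, …, N} with entries A_{j,j} = π²/3 and A_{j,k} = 2(−1)^{j−k}/(j−k)² for j ≠ k. Then A is positive definite: for every nonzero real vector v indexed by {−N,…,N}, vᵀ A v > 0. -/
open Real Matrix

/-!
The entries of `A` are the Fourier coefficients of the symbol `θ²`:
`A j k = π⁻¹ ∫₀^π θ² cos ((j - k) θ) dθ` (`integral_sq_mul_cos`). By the addition formula for the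
cosine, the quadratic form is therefore `vᵀ A v = π⁻¹ ∫₀^π θ² |p(e^{iθ})|² dθ`, where `p` is the
polynomial with coefficients `v`. The integrand is continuous and nonnegative, and it is positive
somewhere in `(0, π)` since a nonzero polynomial has only finitely many roots
(`exists_trig_ne_zero`).
-/

lemma integral_sq_mul_cos (m : ℤ) (hm : m ≠ 0) :
    ∫ θ in (0 : ℝ)..π, θ ^ 2 * cos (m * θ) = π * (2 * (-1 : ℝ) ^ m / (m : ℝ) ^ 2) := by
  have hm' : (m : ℝ) ≠ 0 := by exact_mod_cast hm
  have hd : ∀ x ∈ Set.uIcc (0 : ℝ) π, HasDerivAt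
      (fun θ : ℝ => θ ^ 2 * sin (m * θ) / m + 2 * θ * cos (m * θ) / (m : ℝ) ^ 2
        - 2 * sin (m * θ) / (m : ℝ) ^ 3) (x ^ 2 * cos (m * x)) x := by
    intro x _
    have h1 : HasDerivAt (fun θ : ℝ => (m : ℝ) * θ) m x := by
      simpa using (hasDerivAt_id x).const_mul (m : ℝ)
    have hs := h1.sin
    have hc := h1.cos
    have hx2 : HasDerivAt (fun θ : ℝ => θ ^ 2) (2 * x) x := by
      simpa using hasDerivAt_pow 2 x
    have hx1 : HasDerivAt (fun θ : ℝ => 2 * θ) 2 x := by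
      simpa using (hasDerivAt_id x).const_mul (2 : ℝ)
    refine ((((hx2.mul hs).div_const (m : ℝ)).add
      ((hx1.mul hc).div_const ((m : ℝ) ^ 2))).sub
      ((hs.const_mul 2).div_const ((m : ℝ) ^ 3))).congr_deriv ?_
    field_simp
    ring
  rw [intervalIntegral.integral_eq_sub_of_hasDerivAt hd
    (Continuous.intervalIntegrable (by fun_prop) _ _)]
  simp only [Real.sin_int_mul_pi, Real.cos_int_mul_pi, mul_zero, Real.sin_zero, zero_mul]
  ring

/-- The positive quantity is `|p(e^{iθ})|²` for the polynomial `p` with coefficients `v`; were it to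
vanish on all of `(0, π)`, then `p` would have infinitely many roots. -/
lemma exists_trig_ne_zero {n : ℕ} (v : Fin n → ℝ) (hv : v ≠ 0) :
    ∃ θ ∈ Set.Ioo (0 : ℝ) π,
      0 < (∑ j, v j * cos ((j : ℕ) * θ)) ^ 2 + (∑ j, v j * sin ((j : ℕ) * θ)) ^ 2 := by
  by_contra! hcon
  let p : Polynomial ℂ := ∑ j : Fin n, Polynomial.monomial (j : ℕ) (v j : ℂ)
  have hroot : ∀ θ ∈ Set.Ioo (0 : ℝ) π, p.IsRoot (Complex.exp (θ * Complex.I)) := by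
    intro θ hθ
    have h := hcon θ hθ
    have hc : ∑ j, v j * cos ((j : ℕ) * θ) = 0 := by
      nlinarith [sq_nonneg (∑ j, v j * cos ((j : ℕ) * θ)),
        sq_nonneg (∑ j, v j * sin ((j : ℕ) * θ))]
    have hs : ∑ j, v j * sin ((j : ℕ) * θ) = 0 := by
      nlinarith [sq_nonneg (∑ j, v j * cos ((j : ℕ) * θ)),
        sq_nonneg (∑ j, v j * sin ((j : ℕ) * θ))]
    have e : p.eval (Complex.exp (θ * Complex.I)) =
        ((∑ j, v j * cos ((j : ℕ) * θ) : ℝ) : ℂ)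
          + ((∑ j, v j * sin ((j : ℕ) * θ) : ℝ) : ℂ) * Complex.I := by
      simp only [p, Polynomial.eval_finsetSum, Polynomial.eval_monomial]
      push_cast
      rw [Finset.sum_mul, ← Finset.sum_add_distrib]
      refine Finset.sum_congr rfl fun j _ => ?_
      rw [← Complex.exp_nat_mul, ← mul_assoc, Complex.exp_mul_I]
      ring
    rw [Polynomial.IsRoot, e, hc, hs]
    simp
  have hinj : Set.InjOn (fun θ : ℝ => Complex.exp (θ * Complex.I)) (Set.Ioo 0 π) := by
    intro a ha b hb hab
    have hre := congrArg Complex.re hab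
    simp only [Complex.exp_ofReal_mul_I_re] at hre
    exact Real.injOn_cos (Set.Ioo_subset_Icc_self ha) (Set.Ioo_subset_Icc_self hb) hre
  have hp : p = 0 := by
    refine Polynomial.eq_zero_of_infinite_isRoot p
      (((Set.Ioo_infinite Real.pi_pos).image hinj).mono ?_)
    rintro _ ⟨θ, hθ, rfl⟩
    exact hroot θ hθ
  apply hv
  funext i
  have hi := congrArg (fun q => Polynomial.coeff q (i : ℕ)) hp
  simpa [p, Polynomial.finsetSum_coeff, Polynomial.coeff_monomial, Fin.val_inj] using hi

/-- The symmetric Toeplitz matrix `A` of the Sinc second-derivative coefficients,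
with diagonal entries `π²/3` and off-diagonal entries `2(−1)^(j−k)/(j−k)²`
(indices `j, k ∈ {−N, …, N}`, realized as `Fin (2N+1)` shifted by `N`),
is positive definite. -/
theorem stmt_7 (N : ℕ)
    (A : Matrix (Fin (2 * N + 1)) (Fin (2 * N + 1)) ℝ)
    (hA : ∀ j k : Fin (2 * N + 1),
      A j k = if j = k then π ^ 2 / 3
        else 2 * (-1 : ℝ) ^ ((j : ℤ) - (k : ℤ)) / (((j : ℤ) : ℝ) - ((k : ℤ) : ℝ)) ^ 2) :
    A.PosDef := by
  have hpi := Real.pi_pos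
  have hentry : ∀ j k : Fin (2 * N + 1),
      π * A j k = ∫ θ in (0 : ℝ)..π, θ ^ 2 * cos (((j : ℕ) : ℝ) * θ - ((k : ℕ) : ℝ) * θ) := by
    intro j k
    rw [hA]
    split_ifs with h
    · subst h
      simp
      ring
    · have hm : (j : ℤ) - (k : ℤ) ≠ 0 := by
        intro h0
        apply h
        ext
        omega
      have := integral_sq_mul_cos _ hm
      push_cast at this ⊢
      rw [← this]
      simp only [sub_mul]
  have hsymm : ∀ j k, A j k = A k j := by
    intro j k
    apply mul_left_cancel₀ hpi.ne'
    rw [hentry, hentry]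
    refine intervalIntegral.integral_congr fun θ _ => ?_
    simp only [← Real.cos_neg ((j : ℕ) * θ - (k : ℕ) * θ), neg_sub]
  refine Matrix.PosDef.of_dotProduct_mulVec_pos ?_ ?_
  · ext j k
    simpa using hsymm k j
  · intro v hv
    obtain ⟨θ₀, hθ₀, hpos⟩ := exists_trig_ne_zero v hv
    have key : π * (star v ⬝ᵥ A *ᵥ v) = ∫ θ in (0 : ℝ)..π, θ ^ 2 *
        ((∑ j, v j * cos ((j : ℕ) * θ)) ^ 2 + (∑ j, v j * sin ((j : ℕ) * θ)) ^ 2) := by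
      have expand : ∀ θ : ℝ, θ ^ 2 *
          ((∑ j, v j * cos ((j : ℕ) * θ)) ^ 2 + (∑ j, v j * sin ((j : ℕ) * θ)) ^ 2) =
          ∑ j, ∑ k, v j * v k * (θ ^ 2 * cos (((j : ℕ) : ℝ) * θ - ((k : ℕ) : ℝ) * θ)) := by
        intro θ
        rw [sq (∑ j, _), sq (∑ j, _), Finset.sum_mul_sum, Finset.sum_mul_sum,
          ← Finset.sum_add_distrib, Finset.mul_sum]
        refine Finset.sum_congr rfl fun j _ => ?_
        rw [← Finset.sum_add_distrib, Finset.mul_sum]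
        refine Finset.sum_congr rfl fun k _ => ?_
        rw [Real.cos_sub]
        ring
      simp_rw [expand]
      rw [intervalIntegral.integral_finsetSum
        fun j _ => Continuous.intervalIntegrable (by fun_prop) _ _]
      simp only [dotProduct, mulVec, Finset.mul_sum]
      refine Finset.sum_congr rfl fun j _ => ?_
      rw [intervalIntegral.integral_finsetSum
        fun k _ => Continuous.intervalIntegrable (by fun_prop) _ _]
      refine Finset.sum_congr rfl fun k _ => ?_
      rw [intervalIntegral.integral_const_mul, ← hentry]
      simp only [Pi.star_apply, star_trivial]
      ring
    have hI : 0 < π * (star v ⬝ᵥ A *ᵥ v) := by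
      rw [key]
      refine intervalIntegral.integral_pos hpi (Continuous.continuousOn (by fun_prop))
        (fun θ _ => by positivity) ⟨θ₀, Set.Ioo_subset_Icc_self hθ₀, ?_⟩
      exact mul_pos (pow_pos hθ₀.1 2) hpos
    exact pos_of_mul_pos_right hI hpi.le
end

section
/- Let N ∈ ℕ, h > 0, δ > 0, and let Ṽ_{−N}, …, Ṽ_N be real numbers with Ṽ_k ≥ 1/δ for all k. Let H be the (2N+1)×(2N+1) real matrix indexed by j, k ∈ {−N,…,N} with entries H_{j,k} = −(1/h²) δ⁽²⁾_{j,k} + Ṽ_k [j = k], where δ⁽²⁾_{j,j} = −π²/3 and δ⁽²⁾_{j,k} = −2(−1)^{k−j}/(k−j)² for j ≠ k. Then H is symmetric and positive definite. -/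
open Real Matrix

/-!
Since `-δ₂ j k = (1/π) ∫₀^π t² cos ((k - j) t) dt`, the quadratic form of `-δ₂` at `x` is
`(1/π) ∫₀^π t² ((∑ x_j cos (j t))² + (∑ x_j sin (j t))²) dt ≥ 0`. Hence `-δ₂` is positive
semidefinite, and `H` is the sum of a nonnegative multiple of it and the positive definite
diagonal matrix of the `V k`.
-/

theorem integral_sq_mul_cos_int (n : ℤ) (hn : n ≠ 0) :
    ∫ t in (0 : ℝ)..π, t ^ 2 * cos (n * t) = π * (2 * (-1 : ℝ) ^ n / (n : ℝ) ^ 2) := by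
  have hn' : (n : ℝ) ≠ 0 := by exact_mod_cast hn
  have hd : ∀ t ∈ Set.uIcc (0 : ℝ) π, HasDerivAt
      (fun t : ℝ => t ^ 2 * sin (n * t) / n + 2 * t * cos (n * t) / (n : ℝ) ^ 2
        - 2 * sin (n * t) / (n : ℝ) ^ 3) (t ^ 2 * cos (n * t)) t := by
    intro t _
    have hl : HasDerivAt (fun t : ℝ => (n : ℝ) * t) n t := by
      simpa using (hasDerivAt_id t).const_mul (n : ℝ)
    have hs := hl.sin
    have hc := hl.cos
    have h2 : HasDerivAt (fun t : ℝ => t ^ 2) (2 * t) t := by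
      simpa using hasDerivAt_pow 2 t
    have h1 : HasDerivAt (fun t : ℝ => 2 * t) 2 t := by
      simpa using (hasDerivAt_id t).const_mul (2 : ℝ)
    have h := (((h2.mul hs).div_const (n : ℝ)).add ((h1.mul hc).div_const ((n : ℝ) ^ 2))).sub
      ((hs.const_mul 2).div_const ((n : ℝ) ^ 3))
    refine h.congr_deriv ?_
    field_simp
    ring
  rw [intervalIntegral.integral_eq_sub_of_hasDerivAt hd
    ((by fun_prop : Continuous fun t : ℝ => t ^ 2 * cos (n * t)).intervalIntegrable _ _)]
  simp only [sin_int_mul_pi, cos_int_mul_pi]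
  simp
  ring

/-- The kernel `(j, k) ↦ ∫₀^π t² cos ((k - j) t) dt` is positive semidefinite, being an
integral of Gram kernels. -/
theorem sum_sum_integral_nonneg {m : ℕ} (x : Fin m → ℝ) :
    0 ≤ ∑ j, ∑ k, x j * (x k * ∫ t in (0 : ℝ)..π,
      t ^ 2 * cos ((((k : ℤ) - (j : ℤ) : ℤ) : ℝ) * t)) := by
  have key : ∑ j, ∑ k, x j * (x k * ∫ t in (0 : ℝ)..π,
      t ^ 2 * cos ((((k : ℤ) - (j : ℤ) : ℤ) : ℝ) * t))
      = ∫ t in (0 : ℝ)..π, t ^ 2 * ((∑ j : Fin m, x j * cos ((j : ℝ) * t)) ^ 2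
        + (∑ j : Fin m, x j * sin ((j : ℝ) * t)) ^ 2) := by
    simp_rw [← intervalIntegral.integral_const_mul]
    have hi : ∀ j k : Fin m, IntervalIntegrable (fun t : ℝ => x j * (x k *
        (t ^ 2 * cos ((((k : ℤ) - (j : ℤ) : ℤ) : ℝ) * t)))) MeasureTheory.volume 0 π :=
      fun j k => Continuous.intervalIntegrable (by fun_prop) _ _
    simp_rw [← intervalIntegral.integral_finsetSum (fun k _ => hi _ k)]
    rw [← intervalIntegral.integral_finsetSum
      (fun j _ => Continuous.intervalIntegrable (by fun_prop) _ _)]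
    congr 1
    ext t
    rw [sq (∑ j : Fin m, x j * cos ((j : ℝ) * t)), sq (∑ j : Fin m, x j * sin ((j : ℝ) * t)),
      Finset.sum_mul_sum, Finset.sum_mul_sum, ← Finset.sum_add_distrib, Finset.mul_sum]
    refine Finset.sum_congr rfl fun j _ => ?_
    rw [← Finset.sum_add_distrib, Finset.mul_sum]
    refine Finset.sum_congr rfl fun k _ => ?_
    push_cast
    rw [sub_mul, cos_sub]
    ring
  rw [key]
  exact intervalIntegral.integral_nonneg pi_pos.le fun t _ => by positivity

/-- The discretized Hamiltonian `H` with entries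
`H_{j,k} = −(1/h²) δ⁽²⁾_{j,k} + Ṽ_k [j = k]`, where `δ⁽²⁾_{j,j} = −π²/3` and
`δ⁽²⁾_{j,k} = −2(−1)^(k−j)/(k−j)²` for `j ≠ k`, is symmetric and positive definite
whenever `Ṽ_k ≥ 1/δ > 0` for all `k` (indices `j, k ∈ {−N, …, N}`, realized as
`Fin (2N+1)` shifted by `N`). -/
theorem stmt_8 (N : ℕ) (h δ : ℝ) (hh : 0 < h) (hδ : 0 < δ)
    (V : Fin (2 * N + 1) → ℝ) (hV : ∀ k, 1 / δ ≤ V k)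
    (δ₂ : Fin (2 * N + 1) → Fin (2 * N + 1) → ℝ)
    (hδ₂ : ∀ j k, δ₂ j k = if j = k then -(π ^ 2) / 3
      else -2 * (-1 : ℝ) ^ ((k : ℤ) - (j : ℤ)) / (((k : ℤ) : ℝ) - ((j : ℤ) : ℝ)) ^ 2)
    (H : Matrix (Fin (2 * N + 1)) (Fin (2 * N + 1)) ℝ)
    (hH : ∀ j k, H j k = -(1 / h ^ 2) * δ₂ j k + (if j = k then V k else 0)) :
    H.IsSymm ∧ H.PosDef := by
  have hT : ∀ j k, -δ₂ j k = (1 / π) * ∫ t in (0 : ℝ)..π,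
      t ^ 2 * cos ((((k : ℤ) - (j : ℤ) : ℤ) : ℝ) * t) := by
    intro j k
    rw [hδ₂]
    split_ifs with hjk
    · subst hjk
      simp
      field_simp
      norm_num
    · rw [integral_sq_mul_cos_int _ (by omega)]
      push_cast
      field_simp
  have hsymm : ∀ j k, δ₂ j k = δ₂ k j := by
    intro j k
    rw [← neg_inj, hT, hT]
    congr 2
    ext t
    rw [← cos_neg]
    push_cast
    ring_nf
  have hHs : H.IsSymm := by
    ext j k
    rw [transpose_apply, hH, hH, hsymm]
    by_cases hjk : j = k
    · subst hjk; rfl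
    · simp [hjk, Ne.symm hjk]
  refine ⟨hHs, ?_⟩
  have hpsd : (Matrix.of fun j k => -δ₂ j k).PosSemidef := by
    refine PosSemidef.of_dotProduct_mulVec_nonneg ?_ fun x => ?_
    · ext j k
      simp [hsymm j k]
    · have := mul_nonneg (one_div_pos.mpr pi_pos).le (sum_sum_integral_nonneg x)
      refine this.trans_eq ?_
      simp only [dotProduct, mulVec, Finset.mul_sum, star_trivial, of_apply, hT]
      refine Finset.sum_congr rfl fun j _ => Finset.sum_congr rfl fun k _ => ?_
      ring
  have hdiag : (diagonal V).PosDef :=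
    PosDef.diagonal fun k => (one_div_pos.mpr hδ).trans_le (hV k)
  have hdecomp : H = diagonal V + (1 / h ^ 2) • Matrix.of fun j k => -δ₂ j k := by
    ext j k
    by_cases hjk : j = k
    · subst hjk
      simp [hH]
      ring
    · simp [hH, hjk]
  rw [hdecomp]
  exact hdiag.add_posSemidef (hpsd.smul (by positivity))
end

section
/- Let φ : ℝ → ℝ be three times continuously differentiable with φ'(x) > 0 for all x, let V : ℝ → ℝ be continuous, let E ∈ ℝ, and let ψ : ℝ → ℝ be twice differentiable and satisfy −ψ''(y) + V(y)ψ(y) = E ψ(y) for all y ∈ ℝ. Define v(x) = ψ(φ(x))/√(φ'(x)) and Ṽ(x) = −√(φ'(x)) · d/dx[ (1/φ'(x)) · d/dx(√(φ'(x))) ] + (φ'(x))² V(φ(x)). Then v is twice differentiable and for all x ∈ ℝ, −v''(x) + Ṽ(x) v(x) = E (φ'(x))² v(x). -/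
/-!
Put `s = √(φ')`, so `φ' = s²` and `v = (ψ ∘ φ) / s`, and let `w = s' / s²`. Then
`v' = (ψ' ∘ φ) s - (ψ ∘ φ) w`, and since `s² w = s'` the first-order terms cancel in the second
derivative: `v'' = (ψ'' ∘ φ) s³ - (ψ ∘ φ) w'`. As `Ṽ = -s w' + s⁴ (V ∘ φ)`, the terms in `w'`
cancel in `-v'' + Ṽ v`, leaving `s³` times the equation for `ψ` at `φ x`.
-/

open Real

/-- The symmetrizing change of variable of Eggert et al.: if `ψ` solves
`−ψ'' + Vψ = Eψ` and `φ` is a `C³` map with `φ' > 0`, then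
`v(x) = ψ(φ(x))/√(φ'(x))` solves `−v'' + Ṽ v = E (φ')² v`, where
`Ṽ = −√(φ') (d/dx)[(1/φ') (d/dx)(√(φ'))] + (φ')² V∘φ`. -/
theorem stmt_9 (φ : ℝ → ℝ) (hφ : ContDiff ℝ 3 φ) (hφ' : ∀ x, 0 < deriv φ x)
    (V : ℝ → ℝ) (hV : Continuous V) (E : ℝ)
    (ψ : ℝ → ℝ) (hψ₁ : Differentiable ℝ ψ) (hψ₂ : Differentiable ℝ (deriv ψ))
    (hψ : ∀ y : ℝ, -(deriv (deriv ψ) y) + V y * ψ y = E * ψ y)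
    (v : ℝ → ℝ) (hv : v = fun x => ψ (φ x) / Real.sqrt (deriv φ x))
    (Vt : ℝ → ℝ)
    (hVt : Vt = fun x =>
      -Real.sqrt (deriv φ x) *
        deriv (fun t => (1 / deriv φ t) * deriv (fun s => Real.sqrt (deriv φ s)) t) x
      + (deriv φ x) ^ 2 * V (φ x)) :
    (Differentiable ℝ v ∧ Differentiable ℝ (deriv v)) ∧
    ∀ x : ℝ, -(deriv (deriv v) x) + Vt x * v x = E * (deriv φ x) ^ 2 * v x := by
  -- `s = √(φ')` and `w = s' / φ'`; every derivative below is expressed through these.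
  set s : ℝ → ℝ := fun x => Real.sqrt (deriv φ x) with hs
  set w : ℝ → ℝ := fun t => (1 / deriv φ t) * deriv s t with hw
  have hs0 : ∀ x, s x ≠ 0 := fun x => (Real.sqrt_pos.2 (hφ' x)).ne'
  have hsq : ∀ x, deriv φ x = s x ^ 2 := fun x => (Real.sq_sqrt (hφ' x).le).symm
  have hdφ : ContDiff ℝ 2 (deriv φ) :=
    ((contDiff_succ_iff_deriv (n := 2)).1 (by simpa [two_add_one_eq_three] using hφ)).2.2
  have hsC : ContDiff ℝ 2 s := hdφ.sqrt fun x => (hφ' x).ne'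
  have hdsC : ContDiff ℝ 1 (deriv s) :=
    ((contDiff_succ_iff_deriv (n := 1)).1 (by simpa [one_add_one_eq_two] using hsC)).2.2
  have hφd : ∀ x, HasDerivAt φ (s x ^ 2) x := fun x => by
    rw [← hsq]
    exact (hφ.differentiable (by norm_num) x).hasDerivAt
  have hsd : ∀ x, HasDerivAt s (deriv s x) x := fun x =>
    (hsC.differentiable (by norm_num) x).hasDerivAt
  have hwd : ∀ x, HasDerivAt w (deriv w x) x := fun x => by
    apply DifferentiableAt.hasDerivAt
    exact ((differentiableAt_const 1).div (hdφ.differentiable (by norm_num) x)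
      (hφ' x).ne').mul (hdsC.differentiable (by norm_num) x)
  have hv1 : ∀ x, HasDerivAt v (deriv ψ (φ x) * s x - ψ (φ x) * w x) x := fun x => by
    have h := ((hψ₁ (φ x)).hasDerivAt.comp x (hφd x)).div (hsd x) (hs0 x)
    rw [hv]
    refine h.congr_deriv ?_
    have := hs0 x
    simp only [hw, hsq, Function.comp_apply]
    field_simp
  have hdv : deriv v = fun x => deriv ψ (φ x) * s x - ψ (φ x) * w x :=
    funext fun x => (hv1 x).deriv
  -- The terms containing `ψ'` cancel because `s² w = s'`.
  have hv2 : ∀ x, HasDerivAt (deriv v)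
      (deriv (deriv ψ) (φ x) * s x ^ 3 - ψ (φ x) * deriv w x) x := fun x => by
    have h := (((hψ₂ (φ x)).hasDerivAt.comp x (hφd x)).mul (hsd x)).sub
      (((hψ₁ (φ x)).hasDerivAt.comp x (hφd x)).mul (hwd x))
    rw [hdv]
    refine h.congr_deriv ?_
    have hws : s x ^ 2 * w x = deriv s x := by
      have := hs0 x
      simp only [hw, hsq]
      field_simp
    simp only [Function.comp_apply]
    linear_combination -deriv ψ (φ x) * hws
  refine ⟨⟨fun x => (hv1 x).differentiableAt, fun x => (hv2 x).differentiableAt⟩, fun x => ?_⟩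
  have hvx : v x = ψ (φ x) / s x := by rw [hv]
  have hVx : Vt x = -s x * deriv w x + (s x ^ 2) ^ 2 * V (φ x) := by rw [hVt, ← hsq]
  rw [(hv2 x).deriv, hvx, hVx, hsq]
  have := hs0 x
  field_simp
  linear_combination s x ^ 3 * hψ (φ x)
end

section
/- Let m ≥ 1 be an integer, let ω > 0, and set B = √ω/(m+1). Then for every B' with 0 < B' < B/2^{m+1}, there exists a constant A > 0 such that for all real x with |x| ≥ 1, sinh(|x|)^{−m/2} · cosh(x)^{−1/2} · exp(−B · sinh(|x|)^{m+1}) ≤ A · exp(−B' · exp((m+1)|x|)). -/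
open Real

/-!
For `|x| ≥ 1` both algebraic prefactors are at most `1`, so only the exponents matter.
With `E = exp |x|`, `n = m + 1` and `β = B / 2 ^ n`, Bernoulli's inequality gives
`B * sinh |x| ^ n = β * E ^ n * (1 - E⁻²) ^ n ≥ β * E ^ n * (1 - n * E⁻²)`, which dominates
`B' * E ^ n` as soon as `E ≥ K := n * β / (β - B')`. For `E < K` the quantity `B' * E ^ n` is
bounded by `B' * K ^ n`, so `A = exp (B' * K ^ n)` works (`exponent_bound`).
-/

lemma exponent_bound (n : ℕ) (B B' y : ℝ) (hB' : 0 < B') (hlt : B' < B / 2 ^ n) (hy : 1 ≤ y) :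
    B' * exp y ^ n - B * sinh y ^ n ≤ B' * (n * (B / 2 ^ n) / (B / 2 ^ n - B')) ^ n := by
  set β := B / 2 ^ n with hβ
  set K := n * β / (β - B') with hK
  have hβ0 : 0 < β := hB'.trans hlt
  have hd : 0 < β - B' := sub_pos.2 hlt
  have hBβ : B = β * 2 ^ n := by rw [hβ]; field_simp
  have hB0 : 0 ≤ B := by rw [hBβ]; positivity
  have hK0 : 0 ≤ K := by positivity
  have hs : 0 ≤ sinh y := sinh_nonneg_iff.2 (by linarith)
  have hE1 : 1 ≤ exp y := one_le_exp (by linarith)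
  have hE0 : 0 < exp y := exp_pos y
  rcases lt_or_ge (exp y) K with h | h
  · have h1 : B' * exp y ^ n ≤ B' * K ^ n := by gcongr
    have h2 : 0 ≤ B * sinh y ^ n := by positivity
    linarith
  · have hsinh : B * sinh y ^ n = β * exp y ^ n * (1 + -(exp y ^ 2)⁻¹) ^ n := by
      rw [hBβ, mul_assoc, mul_assoc, ← mul_pow, ← mul_pow, sinh_eq, exp_neg]
      congr 2
      field_simp
      ring
    have hinv : (exp y ^ 2)⁻¹ ≤ 1 := inv_le_one_of_one_le₀ (one_le_pow₀ hE1)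
    have hbern := one_add_mul_le_pow (a := -(exp y ^ 2)⁻¹) (by linarith) n
    have hKE : K ≤ exp y ^ 2 := by nlinarith
    have hkey : n * β * (exp y ^ 2)⁻¹ ≤ β - B' := by
      rw [hK, div_le_iff₀ hd] at hKE
      rw [← div_eq_mul_inv, div_le_iff₀ (by positivity)]
      linarith
    have h1 : B' ≤ β * (1 + -(exp y ^ 2)⁻¹) ^ n := by
      have := mul_le_mul_of_nonneg_left hbern hβ0.le
      linarith
    have h2 : B' * exp y ^ n ≤ B * sinh y ^ n := by
      have := mul_le_mul_of_nonneg_right h1 (by positivity : 0 ≤ exp y ^ n)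
      rw [hsinh]
      linarith
    have h3 : 0 ≤ B' * K ^ n := by positivity
    linarith

/-- Double exponential decay of the transformed solution: with `B = √ω/(m+1)`,
for every `0 < B' < B/2^(m+1)` there is `A > 0` such that for all `|x| ≥ 1`,
`sinh(|x|)^(−m/2) cosh(x)^(−1/2) exp(−B sinh(|x|)^(m+1)) ≤ A exp(−B' exp((m+1)|x|))`. -/
theorem stmt_13 (m : ℕ) (hm : 1 ≤ m) (ω : ℝ) (hω : 0 < ω)
    (B : ℝ) (hB : B = Real.sqrt ω / (m + 1)) :
    ∀ B' : ℝ, 0 < B' → B' < B / 2 ^ (m + 1) →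
      ∃ A : ℝ, 0 < A ∧ ∀ x : ℝ, 1 ≤ |x| →
        Real.sinh |x| ^ (-(m : ℝ) / 2) * Real.cosh x ^ (-(1 : ℝ) / 2) *
            Real.exp (-B * Real.sinh |x| ^ (m + 1)) ≤
          A * Real.exp (-B' * Real.exp ((m + 1) * |x|)) := by
  intro B' hB' hlt
  refine ⟨exp (B' * (((m + 1 : ℕ) : ℝ) * (B / 2 ^ (m + 1)) / (B / 2 ^ (m + 1) - B')) ^ (m + 1)),
    exp_pos _, fun x hx => ?_⟩
  have hb := exponent_bound (m + 1) B B' |x| hB' hlt hx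
  have hs1 : 1 ≤ sinh |x| := hx.trans (self_le_sinh_iff.2 (by linarith))
  have h1 : sinh |x| ^ (-(m : ℝ) / 2) ≤ 1 :=
    rpow_le_one_of_one_le_of_nonpos hs1 (by have : (0 : ℝ) ≤ m := m.cast_nonneg; linarith)
  have h2 : cosh x ^ (-(1 : ℝ) / 2) ≤ 1 :=
    rpow_le_one_of_one_le_of_nonpos (one_le_cosh x) (by norm_num)
  have hE : exp ((m + 1) * |x|) = exp |x| ^ (m + 1) := by
    rw [← exp_nat_mul]; push_cast; rfl
  have h12 : sinh |x| ^ (-(m : ℝ) / 2) * cosh x ^ (-(1 : ℝ) / 2) ≤ 1 :=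
    mul_le_one₀ h1 (rpow_nonneg (cosh_pos x).le _) h2
  refine (mul_le_of_le_one_left (exp_pos _).le h12).trans ?_
  rw [← exp_add, exp_le_exp, hE]
  linarith
end
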